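/- arXiv:2311.10262 — 3 statements merged into one kernel-verified Lean document; each statement's English description precedes it below -/
import Mathlib

section
/- The affinity exponent of the Rauzy gasket is at least 3/2; concretely, the series Σ_w σ2(A_w)^{1/2} · σ1(A_w)^{−2}, summed over all nonempty words w with letters in {1,2,3}, diverges (this series equals Σ_w φ_{3/2}(A_w)). -/
/-!
Only words in the first two letters are needed. Both `A 0` and `A 1` fix the vector `(-1,-1,1)`
and preserve the plane of vectors with vanishing last coordinate, on which they act by the two
standard unipotent generators of `SL₂(ℕ)`. Hence, for such a word `w`, the matrix `A_w` is
conjugate, by a fixed matrix, to `B ⊕ 1` with `B ∈ SL₂(ℕ)`, so that up to bounded factors its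
singular values are `‖B‖, 1, ‖B‖⁻¹`, and the term of the series is comparable to `‖B‖⁻²`
(`term_lower_bound`).

By the subtractive Euclidean algorithm, every pair of coprime positive integers `(p, q)` is the
vector of row sums of such a `B` (`exists_word`), and `‖B‖` is comparable to `p + q`. The series
therefore dominates a multiple of `∑ (p + q)⁻²` over coprime pairs. Keeping only the pairs `(r, j)`
with `r` prime and `0 < j < r` leaves a multiple of `∑ 1 / r` over the primes, which diverges.
-/

open Matrix MeasureTheory

noncomputable section

abbrev M3 := Matrix (Fin 3) (Fin 3) ℝ
abbrev E3 := EuclideanSpace ℝ (Fin 3)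

/-- The Rauzy generators. -/
def A : Fin 3 → M3
  | 0 => !![1,1,1; 0,1,0; 0,0,1]
  | 1 => !![1,0,0; 1,1,1; 0,0,1]
  | 2 => !![1,0,0; 0,1,0; 1,1,1]

/-- Product of the matrices along a word. -/
def Aw (w : List (Fin 3)) : M3 := (w.map A).prod

/-- Euclidean norm of a vector in `ℝ³`. -/
def enorm3 (v : Fin 3 → ℝ) : ℝ := Real.sqrt (v 0 ^ 2 + v 1 ^ 2 + v 2 ^ 2)

/-- Largest singular value = `ℓ²` operator norm. -/
def sval1 (g : M3) : ℝ := ‖(Matrix.toEuclideanLin g).toContinuousLinearMap‖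

/-- Smallest singular value (for invertible `g`): `σ₃(g) = σ₁(g⁻¹)⁻¹`. -/
def sval3 (g : M3) : ℝ := (sval1 g⁻¹)⁻¹

/-- Middle singular value (for invertible `g`): `σ₂ = |det g|·σ₁(g⁻¹)/σ₁(g)`. -/
def sval2 (g : M3) : ℝ := |g.det| * sval1 g⁻¹ / sval1 g

def basis3 (i : Fin 3) : Fin 3 → ℝ := Pi.single i 1

def omega3 (v : Fin 3 → ℝ) : ℝ := v 0 + v 1 + v 2

def ofE : E3 → (Fin 3 → ℝ) := WithLp.equiv 2 (Fin 3 → ℝ)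
def toE : (Fin 3 → ℝ) → E3 := (WithLp.equiv 2 (Fin 3 → ℝ)).symm

/-- The standard 2-simplex in `ℝ³` (with the Euclidean metric). -/
def simplex : Set E3 := {x | (∀ i, 0 ≤ ofE x i) ∧ omega3 (ofE x) = 1}

/-- The projective action of the word `w` on the simplex. -/
def fmap (w : List (Fin 3)) (x : E3) : E3 :=
  toE ((omega3 ((Aw w) *ᵥ ofE x))⁻¹ • ((Aw w) *ᵥ ofE x))

/-- The Rauzy gasket. -/
def gasket : Set E3 :=
  ⋂ n : ℕ, ⋃ w ∈ {w : List (Fin 3) | w.length = n + 1}, fmap w '' simplex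

/-- Falconer's singular value function. -/
def phi (s : ℝ) (g : M3) : ℝ :=
  if s ≤ 1 then (sval2 g / sval1 g) ^ s
  else (sval2 g / sval1 g) * (sval3 g / sval1 g) ^ (s - 1)

/-- The affinity exponent of the Rauzy semigroup. -/
def sA : ℝ :=
  sSup {s : ℝ | s ∈ Set.Ioc (0:ℝ) 2 ∧
    ¬ Summable fun w : {w : List (Fin 3) // w ≠ []} => phi s (Aw w.1)}

/-- A word has its last `k` letters not all the same. -/
def LastNotAllSame (w : List (Fin 3)) (k : ℕ) : Prop :=
  k ≤ w.length ∧ ¬ ∃ c, ∀ x ∈ w.drop (w.length - k), x = c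

/-- A word's last two letters are different. -/
def LastTwoDiff (w : List (Fin 3)) : Prop :=
  ∃ u a b, w = u ++ [a, b] ∧ a ≠ b

/-- The Cartan projection `κ(g) = (log σ₁, log σ₂, log σ₃)`. -/
def kappa (g : M3) : Fin 3 → ℝ :=
  ![Real.log (sval1 g), Real.log (sval2 g), Real.log (sval3 g)]

/-- The linear functional `ψ_s` on the Cartan algebra. -/
def psi (s : ℝ) (lam : Fin 3 → ℝ) : ℝ := (lam 0 - lam 1) + (s - 1) * (lam 0 - lam 2)

end

lemma sval1_nonneg (g : M3) : 0 ≤ sval1 g := norm_nonneg _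

lemma abs_entry_le_sval1 (g : M3) (i j : Fin 3) : |g i j| ≤ sval1 g := by
  have h := (Matrix.toEuclideanLin g).toContinuousLinearMap.le_opNorm
    (EuclideanSpace.single j (1 : ℝ))
  have h2 := PiLp.norm_apply_le
    ((Matrix.toEuclideanLin g).toContinuousLinearMap (EuclideanSpace.single j (1 : ℝ))) i
  have h3 := h2.trans h
  simpa [sval1, Matrix.toEuclideanLin, Matrix.toLpLin_apply, Real.norm_eq_abs] using h3

lemma sval1_le_sum (g : M3) : sval1 g ≤ ∑ i, ∑ j, |g i j| := by
  unfold sval1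
  refine ContinuousLinearMap.opNorm_le_bound _ (by positivity) fun x => ?_
  set y : E3 := (Matrix.toEuclideanLin g).toContinuousLinearMap x with hy
  have hyi : ∀ i, y i = ∑ j, g i j * x j := by
    intro i
    simp [hy, Matrix.toLpLin_apply, Matrix.mulVec, dotProduct]
  have h1 : ‖y‖ ≤ ∑ i, |y i| := by
    rw [EuclideanSpace.norm_eq]
    refine Real.sqrt_le_iff.2 ⟨by positivity, ?_⟩
    simpa [Real.norm_eq_abs] using
      Finset.sum_sq_le_sq_sum_of_nonneg (s := Finset.univ) (f := fun i => |y i|)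
        (fun i _ => abs_nonneg _)
  refine h1.trans ?_
  rw [Finset.sum_mul]
  refine Finset.sum_le_sum fun i _ => ?_
  rw [hyi, Finset.sum_mul]
  refine (Finset.abs_sum_le_sum_abs _ _).trans (Finset.sum_le_sum fun j _ => ?_)
  rw [abs_mul]
  exact mul_le_mul_of_nonneg_left (PiLp.norm_apply_le x j) (abs_nonneg _)

lemma det_Aw (w : List (Fin 3)) : (Aw w).det = 1 := by
  induction w with
  | nil => simp [Aw]
  | cons i w ih =>
    have hA : (A i).det = 1 := by
      fin_cases i <;> simp [A, Matrix.det_fin_three]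
    have : Aw (i :: w) = A i * Aw w := by simp [Aw]
    rw [this, Matrix.det_mul, ih, hA, one_mul]

lemma phi_three_halves (w : List (Fin 3)) :
    phi (3 / 2) (Aw w) = Real.sqrt (sval2 (Aw w)) / sval1 (Aw w) ^ 2 := by
  have e : (3 / 2 - 1 : ℝ) = 1 / 2 := by norm_num
  rw [phi, if_neg (by norm_num), e, ← Real.sqrt_eq_rpow, sval2, sval3, det_Aw, abs_one, one_mul]
  have hN := sval1_nonneg (Aw w)
  have hM := sval1_nonneg (Aw w)⁻¹
  generalize sval1 (Aw w) = N at *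
  generalize sval1 (Aw w)⁻¹ = M at *
  rcases hN.eq_or_lt with rfl | hN
  · simp
  rcases hM.eq_or_lt with rfl | hM
  · simp
  have : M⁻¹ / N = (M / N) / M ^ 2 := by field_simp
  rw [this, Real.sqrt_div (by positivity), Real.sqrt_sq hM.le]
  field_simp

/-- The matrix fixing `(-1,-1,1)` and acting as `!![a, b; c, d]` on the plane spanned by the first
two basis vectors. -/
def blockMat (a b c d : ℝ) : M3 := !![a, b, a + b - 1; c, d, c + d - 1; 0, 0, 1]

lemma blockMat_inv {a b c d : ℝ} (h : a * d - b * c = 1) :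
    (blockMat a b c d)⁻¹ = blockMat d (-b) (-c) a := by
  refine Matrix.inv_eq_right_inv ?_
  ext i j
  fin_cases i <;> fin_cases j <;>
    simp [blockMat, Matrix.mul_apply, Fin.sum_univ_three] <;>
    first | ring1 | linear_combination h

/-- `σ₁` is at most `2 (a + b + c + d)`, while `σ₁` of the inverse is at least the largest of
`a, b, c, d`, so `σ₂` is bounded below. -/
lemma term_lower_bound {w : List (Fin 3)} {a b c d : ℝ} (ha : 0 ≤ a) (hb : 0 ≤ b) (hc : 0 ≤ c)
    (hd : 0 ≤ d) (hdet : a * d - b * c = 1) (hp : 1 ≤ a + b) (hq : 1 ≤ c + d)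
    (hw : Aw w = blockMat a b c d) :
    1 / (12 * (a + b + c + d) ^ 2) ≤ Real.sqrt (sval2 (Aw w)) / sval1 (Aw w) ^ 2 := by
  have hN1 : 1 ≤ sval1 (Aw w) := by
    have := abs_entry_le_sval1 (Aw w) 2 2
    rw [hw] at this ⊢
    simpa [blockMat] using this
  have hN2 : sval1 (Aw w) ≤ 2 * (a + b + c + d) := by
    refine (sval1_le_sum _).trans ?_
    rw [hw]
    simp only [blockMat, Fin.sum_univ_three]
    simp [abs_of_nonneg, ha, hb, hc, hd, hp, hq]
    linarith
  have hM : (a + b + c + d) / 4 ≤ sval1 (Aw w)⁻¹ := by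
    have h1 := abs_entry_le_sval1 (Aw w)⁻¹ 0 0
    have h2 := abs_entry_le_sval1 (Aw w)⁻¹ 0 1
    have h3 := abs_entry_le_sval1 (Aw w)⁻¹ 1 0
    have h4 := abs_entry_le_sval1 (Aw w)⁻¹ 1 1
    rw [hw, blockMat_inv hdet] at h1 h2 h3 h4 ⊢
    simp [blockMat, abs_of_nonneg, ha, hb, hc, hd] at h1 h2 h3 h4 ⊢
    linarith
  rw [sval2, det_Aw, abs_one, one_mul]
  generalize sval1 (Aw w) = N at *
  generalize sval1 (Aw w)⁻¹ = M at *
  have hN : 0 < N := by linarith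
  have hs : 1 / 3 ≤ Real.sqrt (M / N) := by
    refine Real.le_sqrt_of_sq_le ?_
    rw [le_div_iff₀ hN]
    linarith
  have hN3 : N ^ 2 ≤ (2 * (a + b + c + d)) ^ 2 := by gcongr
  calc 1 / (12 * (a + b + c + d) ^ 2) = (1 / 3) / (2 * (a + b + c + d)) ^ 2 := by
        field_simp; norm_num
    _ ≤ Real.sqrt (M / N) / N ^ 2 := by gcongr

/-- The subtractive Euclidean algorithm: every coprime pair is the vector of row sums of the
`SL₂(ℕ)` block of some word in the letters `0` and `1`. -/
lemma exists_word (n : ℕ) : ∀ p q : ℕ, p + q = n → 0 < p → 0 < q → p.Coprime q →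
    ∃ (w : List (Fin 3)) (a b c d : ℝ), 0 ≤ a ∧ 0 ≤ b ∧ 0 ≤ c ∧ 0 ≤ d ∧
      a * d - b * c = 1 ∧ a + b = p ∧ c + d = q ∧ Aw w = blockMat a b c d := by
  induction n using Nat.strong_induction_on with
  | _ n ih =>
    intro p q hn hp hq hcop
    rcases lt_trichotomy p q with h | h | h
    · obtain ⟨k, rfl⟩ := Nat.exists_eq_add_of_lt h
      obtain ⟨w, a, b, c, d, ha, hb, hc, hd, hdet, h1, h2, hw⟩ :=
        ih (p + (k + 1)) (by omega) p (k + 1) rfl hp (by omega)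
          (by rw [add_assoc] at hcop; simpa using hcop)
      refine ⟨1 :: w, a, b, a + c, b + d, ha, hb, by positivity, by positivity,
        by linear_combination hdet, h1, by push_cast at h2 ⊢; linarith, ?_⟩
      have : Aw (1 :: w) = A 1 * Aw w := by simp [Aw]
      rw [this, hw]
      ext i j
      fin_cases i <;> fin_cases j <;>
        simp [blockMat, A, Matrix.mul_apply, Fin.sum_univ_three] <;> ring
    · subst h
      have : p = 1 := by simpa using hcop
      subst this
      refine ⟨[], 1, 0, 0, 1, by norm_num, by norm_num, by norm_num, by norm_num, by norm_num,
        by norm_num, by norm_num, ?_⟩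
      ext i j
      fin_cases i <;> fin_cases j <;> simp [blockMat, Aw]
    · obtain ⟨k, rfl⟩ := Nat.exists_eq_add_of_lt h
      obtain ⟨w, a, b, c, d, ha, hb, hc, hd, hdet, h1, h2, hw⟩ :=
        ih (k + 1 + q) (by omega) (k + 1) q rfl (by omega) hq
          (by rw [add_assoc] at hcop; simpa using hcop)
      refine ⟨0 :: w, a + c, b + d, c, d, by positivity, by positivity, hc, hd,
        by linear_combination hdet, by push_cast at h1 ⊢; linarith, h2, ?_⟩
      have : Aw (0 :: w) = A 0 * Aw w := by simp [Aw]
      rw [this, hw]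
      ext i j
      fin_cases i <;> fin_cases j <;>
        simp [blockMat, A, Matrix.mul_apply, Fin.sum_univ_three] <;> ring

/-- The word attached to the coprime pair `(r, i + 1)`, where `r` is prime. The last column of
`A_w` recovers the pair, which makes this assignment injective. -/
lemma exists_word_of_prime (r : Nat.Primes) (i : Fin (r.1 - 1)) :
    ∃ w : {w : List (Fin 3) // w ≠ []}, Aw w.1 0 2 = (r.1 : ℝ) - 1 ∧ Aw w.1 1 2 = (i.1 : ℝ) ∧
      1 / (48 * (r.1 : ℝ) ^ 2) ≤ Real.sqrt (sval2 (Aw w.1)) / sval1 (Aw w.1) ^ 2 := by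
  have hr := r.2.two_le
  have hi := i.2
  have hr' : (2 : ℝ) ≤ r.1 := by exact_mod_cast hr
  have hi' : (i.1 : ℝ) + 1 ≤ r.1 := by exact_mod_cast (by omega : i.1 + 1 ≤ r.1)
  have hi0 : (0 : ℝ) ≤ i.1 := by positivity
  have hcop : r.1.Coprime (i.1 + 1) :=
    Nat.coprime_of_lt_prime (by omega) (by omega) r.2
  obtain ⟨w, a, b, c, d, ha, hb, hc, hd, hdet, h1, h2, hw⟩ :=
    exists_word _ r.1 (i.1 + 1) rfl (by omega) (by omega) hcop
  push_cast at h2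
  have h02 : Aw w 0 2 = (r.1 : ℝ) - 1 := by rw [hw]; simp [blockMat, h1]
  have h12 : Aw w 1 2 = (i.1 : ℝ) := by rw [hw]; simp [blockMat, h2]
  refine ⟨⟨w, ?_⟩, h02, h12, ?_⟩
  · rintro rfl
    simp [Aw] at h02
    linarith
  · refine le_trans ?_ (term_lower_bound ha hb hc hd hdet (by linarith) (by linarith) hw)
    have : (a + b + c + d) ^ 2 ≤ (2 * (r.1 : ℝ)) ^ 2 := by
      gcongr
      linarith
    have hpos : 0 < a + b + c + d := by linarith
    refine one_div_le_one_div_of_le (by positivity) ?_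
    nlinarith

lemma not_summable_terms :
    ¬ Summable (fun w : {w : List (Fin 3) // w ≠ []} =>
        Real.sqrt (sval2 (Aw w.1)) / sval1 (Aw w.1) ^ 2) := by
  intro hsum
  choose e he0 he1 he2 using exists_word_of_prime
  have hinj : Function.Injective (fun x : (Σ r : Nat.Primes, Fin (r.1 - 1)) => e x.1 x.2) := by
    rintro ⟨r, i⟩ ⟨s, j⟩ h
    simp only at h
    have hrs : (r.1 : ℝ) = s.1 := by
      have h1 := he0 r i
      rw [h, he0 s j] at h1
      linarith
    have hrs' : r = s := Subtype.ext (by exact_mod_cast hrs)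
    subst hrs'
    have hij : (i.1 : ℝ) = j.1 := by rw [← he1 r i, h, he1 r j]
    have hij' : i = j := Fin.ext (by exact_mod_cast hij)
    rw [hij']
  have hs := hsum.comp_injective hinj
  have hs2 := ((summable_sigma_of_nonneg (fun x => by
    have := sval1_nonneg (Aw (e x.1 x.2).1)
    simp only [Function.comp]
    positivity)).1 hs).2
  have hs3 : Summable (fun r : Nat.Primes => (1 / 96 : ℝ) * (1 / (r.1 : ℝ))) := by
    refine Summable.of_nonneg_of_le (fun r => by positivity) (fun r => ?_) hs2
    have hr := r.2.two_le
    have hr' : (2 : ℝ) ≤ r.1 := by exact_mod_cast hr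
    rw [tsum_fintype]
    refine le_trans ?_ (Finset.sum_le_sum fun i _ => he2 r i)
    rw [Finset.sum_const, Finset.card_univ, Fintype.card_fin, nsmul_eq_mul,
      Nat.cast_sub (by omega), Nat.cast_one, mul_one_div, div_div, mul_one_div,
      div_le_div_iff₀ (by positivity) (by positivity)]
    nlinarith [mul_nonneg (by linarith : (0 : ℝ) ≤ r.1) (by linarith : (0 : ℝ) ≤ (r.1 : ℝ) - 2)]
  exact Nat.Primes.not_summable_one_div
    ((summable_mul_left_iff (by norm_num)).1 hs3)

/-- The affinity exponent of the Rauzy gasket is at least 3/2: concretely, the series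
`Σ_w σ₂(A_w)^{1/2} σ₁(A_w)⁻²` over nonempty words diverges (it equals `Σ_w φ_{3/2}(A_w)`). -/
theorem rauzy_affinity_exponent_ge_three_halves :
    (3 / 2 : ℝ) ≤ sA ∧
    ¬ Summable (fun w : {w : List (Fin 3) // w ≠ []} =>
        Real.sqrt (sval2 (Aw w.1)) / sval1 (Aw w.1) ^ 2) := by
  refine ⟨le_csSup ⟨2, fun s hs => hs.1.2⟩ ⟨⟨by norm_num, by norm_num⟩, ?_⟩, not_summable_terms⟩
  simp only [phi_three_halves]
  exact not_summable_terms
end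

section
/- For every integer n ≥ 2 there exists ε_n > 0 such that for every word w with letters in {1,2,3} whose last n letters are not all the same, and for each i ∈ {1,2,3}, one has ‖A_w e_i‖ ≥ ε_n · σ1(A_w), where e_1,e_2,e_3 is the standard basis of ℝ³ and ‖·‖ is the Euclidean norm. -/
/-!
Multiplying a matrix on the right by `A b` keeps the `b`-th column and adds it to the two other
columns. Let `s_j` be the `j`-th column sum of `A_w` (`colSum`). Two facts propagate along words:
the column sums satisfy the (weak) triangle inequalities `s_i ≤ s_j + s_k`, and `s_a` is the
smallest of them when `w` ends with the letter `a`. If `w` ends with `a b`, `a ≠ b`, these facts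
make any two column sums comparable up to the factor `3`, and each further letter increases
the factor by at most `1`. Hence `s_i ≤ (n + 1) s_j` whenever the last `n` letters are not all the
same (`colSum_comparable`). Since `A_w` has nonnegative entries, `s_i` is comparable to
`‖A_w e_i‖`, and the sum of all `s_j` bounds `σ₁(A_w)`.
-/

open Matrix MeasureTheory

lemma Aw_snoc_apply (w : List (Fin 3)) (b i k : Fin 3) :
    Aw (w ++ [b]) i k = if k = b then Aw w i b else Aw w i k + Aw w i b := by
  simp only [Aw, List.map_append, List.prod_append, List.map_cons, List.map_nil, List.prod_cons,
    List.prod_nil, mul_one, Matrix.mul_apply, Fin.sum_univ_three]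
  fin_cases b <;> fin_cases k <;> simp [A] <;> ring

lemma Aw_nonneg (w : List (Fin 3)) : ∀ i j, 0 ≤ Aw w i j := by
  induction w using List.reverseRecOn with
  | nil =>
    intro i j
    simp only [Aw, List.map_nil, List.prod_nil, Matrix.one_apply]
    split_ifs <;> norm_num
  | append_singleton w b ih =>
    intro i j
    rw [Aw_snoc_apply]
    split_ifs
    · exact ih _ _
    · exact add_nonneg (ih _ _) (ih _ _)

/-- The sum of the entries of the `j`-th column of `A_w`. -/
noncomputable def colSum (w : List (Fin 3)) (j : Fin 3) : ℝ := Aw w 0 j + Aw w 1 j + Aw w 2 j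

lemma colSum_nonneg (w : List (Fin 3)) (j : Fin 3) : 0 ≤ colSum w j :=
  add_nonneg (add_nonneg (Aw_nonneg w 0 j) (Aw_nonneg w 1 j)) (Aw_nonneg w 2 j)

lemma colSum_snoc (w : List (Fin 3)) (b k : Fin 3) :
    colSum (w ++ [b]) k = if k = b then colSum w b else colSum w k + colSum w b := by
  simp only [colSum, Aw_snoc_apply]
  split_ifs <;> ring

lemma colSum_triangle (w : List (Fin 3)) :
    colSum w 0 ≤ colSum w 1 + colSum w 2 ∧ colSum w 1 ≤ colSum w 0 + colSum w 2 ∧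
      colSum w 2 ≤ colSum w 0 + colSum w 1 := by
  induction w using List.reverseRecOn with
  | nil => simp [colSum, Aw, Fin.ext_iff]
  | append_singleton w b ih =>
    obtain ⟨h0, h1, h2⟩ := ih
    have p0 := colSum_nonneg w 0
    have p1 := colSum_nonneg w 1
    have p2 := colSum_nonneg w 2
    simp only [colSum_snoc]
    fin_cases b <;> simp <;> refine ⟨?_, ?_, ?_⟩ <;> linarith

lemma colSum_last_le (w : List (Fin 3)) (a k : Fin 3) :
    colSum (w ++ [a]) a ≤ colSum (w ++ [a]) k := by
  have := colSum_nonneg w k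
  rw [colSum_snoc, colSum_snoc]
  split_ifs <;> simp_all

/-- The base case of the comparison: the last two letters are different. -/
lemma colSum_two (w : List (Fin 3)) (a b : Fin 3) (hab : a ≠ b) (i j : Fin 3) :
    colSum (w ++ [a] ++ [b]) i ≤ 3 * colSum (w ++ [a] ++ [b]) j := by
  -- The letter `b` leaves `s_b` the smallest, so only `j = b` matters.
  refine le_trans ?_ (mul_le_mul_of_nonneg_left (colSum_last_le (w ++ [a]) b j) (by norm_num))
  obtain ⟨h0, h1, h2⟩ := colSum_triangle (w ++ [a])
  have ha := colSum_last_le w a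
  have q0 := ha 0
  have q1 := ha 1
  have q2 := ha 2
  have p0 := colSum_nonneg (w ++ [a]) 0
  have p1 := colSum_nonneg (w ++ [a]) 1
  have p2 := colSum_nonneg (w ++ [a]) 2
  rw [colSum_snoc (w ++ [a]), colSum_snoc (w ++ [a])]
  generalize colSum (w ++ [a]) = s at *
  fin_cases a <;> fin_cases b <;> fin_cases i <;> simp at * <;> linarith

/-- If the final segment `t` of a word is not constant, any two column sums are comparable up to
the factor `|t| + 1`. -/
lemma colSum_comparable (p t : List (Fin 3)) (ht : ¬ ∃ c, ∀ x ∈ t, x = c) (i j : Fin 3) :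
    colSum (p ++ t) i ≤ (t.length + 1) * colSum (p ++ t) j := by
  induction t using List.reverseRecOn generalizing i j with
  | nil => simp at ht
  | append_singleton t b ih =>
    rw [← List.append_assoc]
    have hb := colSum_nonneg (p ++ t) b
    have hlast := colSum_last_le (p ++ t) b j
    by_cases hc : ∃ c, ∀ x ∈ t, x = c
    · obtain ⟨c, hc⟩ := hc
      rcases List.eq_nil_or_concat' t with rfl | ⟨t', a, rfl⟩
      · simp at ht
      · have hab : a ≠ b := by
          rintro rfl
          refine ht ⟨a, fun x hx => ?_⟩
          have hac : a = c := hc a (by simp)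
          rcases List.mem_append.1 hx with h | h
          · rw [hc x h, hac]
          · simpa using h
        have h3 := colSum_two (p ++ t') a b hab i j
        have hj := colSum_nonneg (p ++ (t' ++ [a]) ++ [b]) j
        rw [List.append_assoc p t' [a]] at h3
        refine h3.trans (mul_le_mul_of_nonneg_right ?_ hj)
        have : (0 : ℝ) ≤ t'.length := Nat.cast_nonneg _
        simp only [List.length_append, List.length_cons, List.length_nil]
        push_cast
        linarith
    · have h1 := ih hc i b
      have h2 : colSum (p ++ t ++ [b]) i ≤ colSum (p ++ t) i + colSum (p ++ t) b := by
        have := colSum_nonneg (p ++ t) i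
        rw [colSum_snoc]
        split_ifs <;> linarith
      have h3 : colSum (p ++ t ++ [b]) b = colSum (p ++ t) b := by
        rw [colSum_snoc, if_pos rfl]
      rw [h3] at hlast
      have h4 : ((t.length : ℝ) + 2) * colSum (p ++ t) b ≤
          (t.length + 2) * colSum (p ++ t ++ [b]) j :=
        mul_le_mul_of_nonneg_left hlast (by positivity)
      simp only [List.length_append, List.length_cons, List.length_nil]
      push_cast
      linarith

lemma colSum_le_enorm3 (w : List (Fin 3)) (i : Fin 3) :
    colSum w i ≤ 2 * enorm3 (Aw w *ᵥ basis3 i) := by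
  have h : colSum w i / 2 ≤ enorm3 (Aw w *ᵥ basis3 i) := by
    refine Real.le_sqrt_of_sq_le ?_
    simp only [basis3, Matrix.mulVec_single_one, Matrix.col_apply, colSum]
    nlinarith [sq_nonneg (Aw w 0 i - Aw w 1 i), sq_nonneg (Aw w 0 i - Aw w 2 i),
      sq_nonneg (Aw w 1 i - Aw w 2 i), sq_nonneg (Aw w 0 i), sq_nonneg (Aw w 1 i),
      sq_nonneg (Aw w 2 i)]
  linarith

/-- The operator norm of the nonnegative matrix `A_w` is at most the sum of its entries. -/
lemma sval1_le (w : List (Fin 3)) :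
    sval1 (Aw w) ≤ colSum w 0 + colSum w 1 + colSum w 2 := by
  have hS : 0 ≤ colSum w 0 + colSum w 1 + colSum w 2 :=
    add_nonneg (add_nonneg (colSum_nonneg w 0) (colSum_nonneg w 1)) (colSum_nonneg w 2)
  refine ContinuousLinearMap.opNorm_le_bound _ hS fun x => ?_
  have hrow : ∀ i, |(Aw w *ᵥ x.ofLp) i| ≤ (Aw w i 0 + Aw w i 1 + Aw w i 2) * ‖x‖ := by
    intro i
    have hx : ∀ j, |Aw w i j * x j| ≤ Aw w i j * ‖x‖ := fun j => by
      rw [abs_mul, abs_of_nonneg (Aw_nonneg w i j)]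
      exact mul_le_mul_of_nonneg_left (PiLp.norm_apply_le x j) (Aw_nonneg w i j)
    simp only [Matrix.mulVec, dotProduct, Fin.sum_univ_three]
    refine (abs_add_three _ _ _).trans ?_
    linarith [hx 0, hx 1, hx 2]
  have hl1 : ∀ y : E3, ‖y‖ ≤ |y 0| + |y 1| + |y 2| := by
    intro y
    rw [EuclideanSpace.norm_eq, Fin.sum_univ_three]
    refine Real.sqrt_le_iff.2 ⟨by positivity, ?_⟩
    simp only [Real.norm_eq_abs]
    nlinarith [mul_nonneg (abs_nonneg (y 0)) (abs_nonneg (y 1)),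
      mul_nonneg (abs_nonneg (y 0)) (abs_nonneg (y 2)),
      mul_nonneg (abs_nonneg (y 1)) (abs_nonneg (y 2))]
  refine (hl1 _).trans ?_
  have h0 := hrow 0
  have h1 := hrow 1
  have h2 := hrow 2
  simp only [LinearMap.coe_toContinuousLinearMap', Matrix.toLpLin_apply, colSum]
  linarith

/-- For every `n ≥ 2` there is `ε > 0` so that for any word whose last `n` letters
are not all the same, `‖A_w e_i‖ ≥ ε σ₁(A_w)` for each standard basis vector `e_i`. -/
theorem norm_image_basis_ge (n : ℕ) (hn : 2 ≤ n) :
    ∃ ε > (0:ℝ), ∀ w : List (Fin 3), LastNotAllSame w n →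
      ∀ i : Fin 3, ε * sval1 (Aw w) ≤ enorm3 (Aw w *ᵥ basis3 i) := by
  -- `σ₁ ≤ s_0 + s_1 + s_2 ≤ 3 (n + 1) s_i ≤ 6 (n + 1) ‖A_w e_i‖`
  refine ⟨1 / (6 * (n + 1)), by positivity, ?_⟩
  rintro w ⟨hlen, hw⟩ i
  have hcmp : ∀ k, colSum w k ≤ (n + 1) * colSum w i := by
    intro k
    have h := colSum_comparable (w.take (w.length - n)) _ hw k i
    rwa [List.take_append_drop, List.length_drop, Nat.sub_sub_self hlen] at h
  have h1 := sval1_le w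
  have h2 : ((n : ℝ) + 1) * colSum w i ≤ (n + 1) * (2 * enorm3 (Aw w *ᵥ basis3 i)) :=
    mul_le_mul_of_nonneg_left (colSum_le_enorm3 w i) (by positivity)
  rw [one_div, inv_mul_le_iff₀ (by positivity)]
  linarith [hcmp 0, hcmp 1, hcmp 2]
end

section
/- Let n ≥ 2 and let w be a word with letters in {1,2,3} of length at least n whose last n letters are not all the same. Then for every vector v ∈ ℝ³ with nonnegative coordinates, the vector u = (A_w)ᵗ · A_w · v has nonnegative coordinates and each coordinate of u is at most the sum of the other two coordinates (i.e. u lies in the closed cone over the projective triangle Δ'‾ with vertices (0,1,1), (1,0,1), (1,1,0)). -/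
/-!
Let `T` be the closed cone of nonnegative vectors each of whose coordinates is at most the sum of
the other two. The generators preserve the nonnegative cone, their transposes preserve `T`
(`inTriangle_transpose`), and `(A i)ᵀ * A i` already sends the nonnegative cone into `T`
(`inTriangle_gram`). If `w = i :: s`, then
`(Aw w)ᵀ * Aw w = (Aw s)ᵀ * ((A i)ᵀ * A i) * Aw s`: a nonnegative vector is sent by `Aw s` to a
nonnegative vector, then by the Gram matrix of the first letter into `T`, and `(Aw s)ᵀ` keeps it
there.
-/

open Matrix MeasureTheory

/-- The closed cone over the projective triangle with vertices `(0,1,1)`, `(1,0,1)`, `(1,1,0)`. -/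
def InTriangle (u : Fin 3 → ℝ) : Prop :=
  (∀ j, 0 ≤ u j) ∧ u 0 ≤ u 1 + u 2 ∧ u 1 ≤ u 0 + u 2 ∧ u 2 ≤ u 0 + u 1

theorem nonneg_A_mulVec (i : Fin 3) (v : Fin 3 → ℝ) (hv : ∀ j, 0 ≤ v j) :
    ∀ j, 0 ≤ (A i *ᵥ v) j := by
  have h0 := hv 0
  have h1 := hv 1
  have h2 := hv 2
  intro j
  fin_cases i <;> fin_cases j <;>
    simp [A, Matrix.mulVec, dotProduct, Fin.sum_univ_three] <;> linarith

theorem inTriangle_transpose (i : Fin 3) (u : Fin 3 → ℝ) (hu : InTriangle u) :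
    InTriangle ((A i)ᵀ *ᵥ u) := by
  obtain ⟨hp, ha, hb, hc⟩ := hu
  have h0 := hp 0
  have h1 := hp 1
  have h2 := hp 2
  refine ⟨fun j => ?_, ?_, ?_, ?_⟩
  · fin_cases i <;> fin_cases j <;>
      simp [A, Matrix.mulVec, dotProduct, Fin.sum_univ_three] <;> linarith
  all_goals
    fin_cases i <;>
      simp [A, Matrix.mulVec, dotProduct, Fin.sum_univ_three] <;> linarith

theorem inTriangle_gram (i : Fin 3) (v : Fin 3 → ℝ) (hv : ∀ j, 0 ≤ v j) :
    InTriangle ((A i)ᵀ *ᵥ (A i *ᵥ v)) := by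
  have h0 := hv 0
  have h1 := hv 1
  have h2 := hv 2
  refine ⟨fun j => ?_, ?_, ?_, ?_⟩
  · fin_cases i <;> fin_cases j <;>
      simp [A, Matrix.mulVec, dotProduct, Fin.sum_univ_three] <;> linarith
  all_goals
    fin_cases i <;>
      simp [A, Matrix.mulVec, dotProduct, Fin.sum_univ_three] <;> linarith

theorem Aw_cons (i : Fin 3) (w : List (Fin 3)) : Aw (i :: w) = A i * Aw w := by
  simp [Aw]

theorem nonneg_Aw_mulVec (w : List (Fin 3)) (v : Fin 3 → ℝ) (hv : ∀ j, 0 ≤ v j) :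
    ∀ j, 0 ≤ (Aw w *ᵥ v) j := by
  induction w with
  | nil => simpa [Aw] using hv
  | cons i w ih =>
    rw [Aw_cons, ← Matrix.mulVec_mulVec]
    exact nonneg_A_mulVec i _ ih

theorem inTriangle_Aw_transpose (w : List (Fin 3)) (u : Fin 3 → ℝ) (hu : InTriangle u) :
    InTriangle ((Aw w)ᵀ *ᵥ u) := by
  induction w generalizing u with
  | nil => simpa [Aw] using hu
  | cons i w ih =>
    rw [Aw_cons, Matrix.transpose_mul, ← Matrix.mulVec_mulVec]
    exact ih _ (inTriangle_transpose i u hu)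

/-- If the last `n ≥ 2` letters of `w` are not all the same, then for every vector `v`
with nonnegative coordinates, `(A_w)ᵗ A_w v` has nonnegative coordinates, each at most
the sum of the other two. -/
theorem transpose_product_image_in_closed_triangle (n : ℕ) (hn : 2 ≤ n)
    (w : List (Fin 3)) (hw : LastNotAllSame w n)
    (v : Fin 3 → ℝ) (hv : ∀ i, 0 ≤ v i) :
    (∀ j, 0 ≤ (((Aw w)ᵀ * Aw w) *ᵥ v) j) ∧
    (((Aw w)ᵀ * Aw w) *ᵥ v) 0 ≤ (((Aw w)ᵀ * Aw w) *ᵥ v) 1 + (((Aw w)ᵀ * Aw w) *ᵥ v) 2 ∧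
    (((Aw w)ᵀ * Aw w) *ᵥ v) 1 ≤ (((Aw w)ᵀ * Aw w) *ᵥ v) 0 + (((Aw w)ᵀ * Aw w) *ᵥ v) 2 ∧
    (((Aw w)ᵀ * Aw w) *ᵥ v) 2 ≤ (((Aw w)ᵀ * Aw w) *ᵥ v) 0 + (((Aw w)ᵀ * Aw w) *ᵥ v) 1 := by
  change InTriangle (((Aw w)ᵀ * Aw w) *ᵥ v)
  cases w with
  | nil =>
    have h : n ≤ 0 := hw.1
    omega
  | cons i w =>
    rw [← Matrix.mulVec_mulVec, Aw_cons, Matrix.transpose_mul, ← Matrix.mulVec_mulVec,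
      ← Matrix.mulVec_mulVec]
    exact inTriangle_Aw_transpose w _ (inTriangle_gram i _ (nonneg_Aw_mulVec w v hv))
end
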